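/- arXiv:2201.03838 — 2 statements merged into one kernel-verified Lean document; each statement's English description precedes it below -/
import Mathlib

section
/- Let f ∈ ℂ(z) be a rational function that is not the derivative of any rational function. Let L be a differential field of characteristic zero containing (an embedded copy of) ℂ on which the derivation δ vanishes, and let K be a differential subfield of L containing ℂ (i.e. δ(K) ⊆ K). Suppose y ∈ L satisfies δ(δy) = δy · f(y) and δy ≠ 0. If y is transcendental over K, then δy is transcendental over the field K(y); equivalently, y and δy are algebraically independent over K. (This is the key content of the strong minimality of the Poizat equation z'' = z'·f(z), z' ≠ 0.) -/
open Polynomial Differential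

/-- `f` is the derivative of a rational function. -/
def RatFunc.IsDerivative {k : Type*} [Field k] (f : RatFunc k) : Prop :=
  ∃ r s : k[X], s ≠ 0 ∧ f = algebraMap k[X] (RatFunc k) (derivative r * s - r * derivative s) /
    algebraMap k[X] (RatFunc k) (s ^ 2)

namespace RatFunc.IsDerivative

variable {k : Type*} [Field k]

theorem zero : IsDerivative (0 : RatFunc k) := ⟨0, 1, one_ne_zero, by simp⟩

theorem add {f g : RatFunc k} (hf : f.IsDerivative) (hg : g.IsDerivative) :
    (f + g).IsDerivative := by
  obtain ⟨r, s, hs, rfl⟩ := hf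
  obtain ⟨t, u, hu, rfl⟩ := hg
  refine ⟨r * u + t * s, s * u, mul_ne_zero hs hu, ?_⟩
  have hs' := algebraMap_ne_zero hs
  have hu' := algebraMap_ne_zero hu
  simp only [derivative_mul, map_sub, map_add, map_mul, map_pow]
  field_simp
  ring

theorem sum {ι : Type*} {S : Finset ι} {f : ι → RatFunc k} (h : ∀ i ∈ S, (f i).IsDerivative) :
    (∑ i ∈ S, f i).IsDerivative :=
  Finset.sum_induction f IsDerivative (fun _ _ ↦ add) zero h

theorem algebraMap_polynomial [CharZero k] (p : k[X]) :
    IsDerivative (algebraMap k[X] (RatFunc k) p) := by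
  induction p using Polynomial.induction_on' with
  | add p q hp hq => rw [map_add]; exact hp.add hq
  | monomial n a =>
    refine ⟨Polynomial.monomial (n + 1) (a / (n + 1)), 1, one_ne_zero, ?_⟩
    have : (n + 1 : k) ≠ 0 := n.cast_add_one_ne_zero
    simp [this]

theorem C_mul_inv_pow [CharZero k] (a c : k) (n : ℕ) :
    IsDerivative (algebraMap k[X] (RatFunc k) (Polynomial.C a) *
      (algebraMap k[X] (RatFunc k) (Polynomial.X - Polynomial.C c))⁻¹ ^ (n + 2)) := by
  have hX := X_sub_C_ne_zero c
  refine ⟨Polynomial.C (-a / (n + 1)), (Polynomial.X - Polynomial.C c) ^ (n + 1),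
    pow_ne_zero _ hX, ?_⟩
  have hn : (n + 1 : k) ≠ 0 := n.cast_add_one_ne_zero
  have h : Polynomial.C (-a / (n + 1)) * Polynomial.C (n + 1 : k) = - Polynomial.C a := by
    rw [← Polynomial.C_mul, div_mul_cancel₀ _ hn, Polynomial.C_neg]
  rw [inv_pow, ← div_eq_mul_inv, ← map_pow, div_eq_div_iff (algebraMap_ne_zero (pow_ne_zero _ hX))
    (algebraMap_ne_zero (pow_ne_zero _ (pow_ne_zero _ hX))),
    ← map_mul, ← map_mul]
  congr 1
  simp only [derivative_pow, derivative_C, derivative_sub, derivative_X, Nat.add_sub_cancel]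
  push_cast [map_add, map_one, pow_succ] at h ⊢
  linear_combination (Polynomial.X - Polynomial.C c) ^ (2 * n + 2) * h

end RatFunc.IsDerivative

/-- A rational function over an algebraically closed field that is not a derivative differs from
a derivative by a function with a simple pole. -/
theorem RatFunc.exists_residue_ne_zero {k : Type*} [Field k] [CharZero k] [IsAlgClosed k]
    {f : RatFunc k} (hf : ¬ f.IsDerivative) :
    ∃ g : RatFunc k, g.IsDerivative ∧ ∃ (a c : k) (v w : k[X]), a ≠ 0 ∧ w.eval c ≠ 0 ∧
      f = g + algebraMap k[X] (RatFunc k) (Polynomial.C a) /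
        algebraMap k[X] (RatFunc k) (Polynomial.X - Polynomial.C c) +
        algebraMap k[X] (RatFunc k) v / algebraMap k[X] (RatFunc k) w := by
  classical
  set φ := algebraMap k[X] (RatFunc k)
  let π : k → k[X] := fun c ↦ Polynomial.X - Polynomial.C c
  have hπ (c : k) : φ (π c) ≠ 0 := algebraMap_ne_zero (X_sub_C_ne_zero c)
  let S := f.denom.roots.toFinset
  obtain ⟨q, r, hr, hq⟩ := mul_prod_pow_inverse_eq_quo_add_sum_rem_mul_pow_inverse (s := S)
    (g := π) (K := RatFunc k) f.num (fun i _ ↦ monic_X_sub_C i)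
    (fun i _ j _ hij ↦ isCoprime_X_sub_C_of_isUnit_sub (sub_ne_zero.mpr hij).isUnit)
    (fun i ↦ f.denom.roots.count i) (gi := fun i ↦ (φ (π i))⁻¹)
    (fun i _ ↦ inv_mul_cancel₀ (hπ i))
  have hden : φ f.denom = ∏ i ∈ S, φ (π i) ^ f.denom.roots.count i := by
    conv_lhs => rw [(IsAlgClosed.splits f.denom).eq_prod_roots_of_monic (monic_denom f)]
    rw [Finset.prod_multiset_map_count, map_prod]
    simp [S, π]
  have hf_eq : f = φ q + ∑ i ∈ S, ∑ j, φ (r i j) * (φ (π i))⁻¹ ^ (j.1 + 1) := by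
    rw [← hq]
    conv_lhs => rw [← num_div_denom f]
    simp only [inv_pow, Finset.prod_inv_distrib, ← hden, div_eq_mul_inv, φ]
  have hloc (i : k) : ∃ (g : RatFunc k) (a : k), i ∈ S → g.IsDerivative ∧
      ∑ j, φ (r i j) * (φ (π i))⁻¹ ^ (j.1 + 1) = g + φ (Polynomial.C a) / φ (π i) := by
    by_cases hi : i ∈ S
    swap
    · exact ⟨0, 0, fun h ↦ (hi h).elim⟩
    obtain ⟨g, a, h⟩ := Finset.sum_induction (s := Finset.univ)
      (fun j ↦ φ (r i j) * (φ (π i))⁻¹ ^ (j.1 + 1))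
      (fun x ↦ ∃ (g : RatFunc k) (a : k), g.IsDerivative ∧ x = g + φ (Polynomial.C a) / φ (π i))
      (by
        rintro _ _ ⟨g, a, hg, rfl⟩ ⟨h, b, hh, rfl⟩
        exact ⟨g + h, a + b, hg.add hh, by simp only [map_add]; ring⟩)
      ⟨0, 0, .zero, by simp⟩
      (by
        rintro ⟨j, hj⟩ -
        have hd : (r i ⟨j, hj⟩).degree < 1 := (hr i hi ⟨j, hj⟩).trans_eq (degree_X_sub_C i)
        obtain ⟨b, hb⟩ : ∃ b, r i ⟨j, hj⟩ = Polynomial.C b :=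
          ⟨_, eq_C_of_degree_le_zero (Nat.WithBot.lt_one_iff_le_zero.mp hd)⟩
        rcases j with _ | j
        · exact ⟨0, b, .zero, by simp [hb, div_eq_mul_inv]⟩
        · exact ⟨_, 0, .C_mul_inv_pow b i j, by simp [hb, π, φ]⟩)
    exact ⟨g, a, fun _ ↦ h⟩
  choose g a hga using hloc
  rw [Finset.sum_congr rfl fun i hi ↦ (hga i hi).2, Finset.sum_add_distrib, ← add_assoc] at hf_eq
  have hG : (φ q + ∑ i ∈ S, g i).IsDerivative :=
    (IsDerivative.algebraMap_polynomial q).add (.sum fun i hi ↦ (hga i hi).1)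
  obtain ⟨c, hcS, hc⟩ : ∃ c ∈ S, a c ≠ 0 := by
    by_contra! h
    refine hf ?_
    have h0 : ∑ i ∈ S, φ (Polynomial.C (a i)) / φ (π i) = 0 :=
      Finset.sum_eq_zero fun i hi ↦ by simp [h i hi]
    rw [hf_eq, h0, add_zero]
    exact hG
  have hfrac : ∃ v w : k[X], w.eval c ≠ 0 ∧
      ∑ i ∈ S.erase c, φ (Polynomial.C (a i)) / φ (π i) = φ v / φ w :=
    Finset.sum_induction _ (fun x ↦ ∃ v w : k[X], w.eval c ≠ 0 ∧ x = φ v / φ w)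
      (by
        rintro _ _ ⟨v, w, hw, rfl⟩ ⟨v', w', hw', rfl⟩
        refine ⟨v * w' + w * v', w * w', by simp [hw, hw'], ?_⟩
        have h1 : φ w ≠ 0 := algebraMap_ne_zero (by rintro rfl; simp at hw)
        have h2 : φ w' ≠ 0 := algebraMap_ne_zero (by rintro rfl; simp at hw')
        rw [div_add_div _ _ h1 h2, map_add, map_mul, map_mul, map_mul])
      ⟨0, 1, by simp, by simp⟩
      (fun i hi ↦ ⟨_, π i, by simpa [π, sub_eq_zero] using (Finset.ne_of_mem_erase hi).symm, rfl⟩)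
  obtain ⟨v, w, hw, hvw⟩ := hfrac
  refine ⟨_, hG, a c, c, v, w, hc, hw, ?_⟩
  rw [← hvw, add_assoc, Finset.add_sum_erase S (fun i ↦ φ (Polynomial.C (a i)) / φ (π i)) hcS]
  exact hf_eq

/-- A derivative of a rational function cannot have a simple pole with nonzero residue
(in cleared-denominator form). -/
theorem Polynomial.derivative_quotient_ne_simple_pole {K : Type*} [Field K] [CharZero K]
    {t s v w : K[X]} {a c : K} (hs : s ≠ 0) (ha : a ≠ 0) (hw : w.eval c ≠ 0) :
    ((derivative t * s - t * derivative s) * (X - C c) + C a * s ^ 2) * w ≠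
      v * (X - C c) * s ^ 2 := by
  intro h
  obtain ⟨m, s₀, hs₀, rfl⟩ : ∃ m s₀, s₀.eval c ≠ 0 ∧ s = (X - C c) ^ m * s₀ := by
    obtain ⟨s₀, h₁, h₂⟩ := exists_eq_pow_rootMultiplicity_mul_and_not_dvd s hs c
    exact ⟨_, s₀, fun h ↦ h₂ (dvd_iff_isRoot.mpr h), h₁⟩
  induction m generalizing t with
  | zero =>
    have := congrArg (eval c) h
    simp [ha, hw, hs₀] at this
  | succ m ih =>
    have hX : (X - C c : K[X]) ≠ 0 := X_sub_C_ne_zero c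
    by_cases ht : t.eval c = 0
    · obtain ⟨t, rfl⟩ := dvd_iff_isRoot.mpr ht
      refine ih (t := t) (right_ne_zero_of_mul (a := X - C c) ?_) ?_
      · rwa [← mul_assoc, ← pow_succ']
      · refine mul_left_cancel₀ (pow_ne_zero 2 hX) ?_
        simp only [derivative_mul, derivative_pow, derivative_sub, derivative_X, derivative_C,
          pow_succ] at h ⊢
        linear_combination h
    · have key : ((X - C c) * (derivative t * s₀ - t * derivative s₀) - C (m + 1 : K) * t * s₀ +
          C a * (X - C c) ^ (m + 1) * s₀ ^ 2) * w = v * (X - C c) ^ (m + 2) * s₀ ^ 2 := by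
        refine mul_left_cancel₀ (pow_ne_zero (m + 1) hX) ?_
        simp only [derivative_mul, derivative_pow, derivative_sub, derivative_X, derivative_C,
          Nat.add_sub_cancel] at h
        push_cast [map_add, map_one, pow_succ] at h ⊢
        linear_combination h
      have := congrArg (eval c) key
      simp [hs₀, hw, ht, Nat.cast_add_one_ne_zero] at this

/-- The logarithmic derivative of a polynomial, taken coefficientwise, has no pole at a constant. -/
theorem Differential.exists_mapCoeffs_mul_eq {K : Type*} [Field K] [Differential K]
    {p : K[X]} (hp : p ≠ 0) {c : K} (hc : c′ = 0) :
    ∃ p₀ : K[X], p₀.eval c ≠ 0 ∧ mapCoeffs p * p₀ = mapCoeffs p₀ * p := by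
  obtain ⟨p₀, h₁, h₂⟩ := exists_eq_pow_rootMultiplicity_mul_and_not_dvd p hp c
  refine ⟨p₀, fun h ↦ h₂ (dvd_iff_isRoot.mpr h), ?_⟩
  have h : mapCoeffs ((X - C c) ^ p.rootMultiplicity c) = 0 := by
    simp [Derivation.leibniz_pow, hc]
  rw [h₁, Derivation.leibniz, h]
  simp only [smul_eq_mul]
  ring

/-- If `u` is algebraic over `F`, `u′ = u * g`, and the derivation on `F` has the form
`A + u B`, then comparing the minimal polynomial of `u` with its derivative gives a relation
in `F`. -/
theorem IsAlgebraic.exists_relation_of_deriv_eq {F L : Type*} [Field F] [Field L] [Algebra F L]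
    [Differential L] {u : L} (hu : IsAlgebraic F u) (hu0 : u ≠ 0) {g : F}
    (hg : u′ = u * algebraMap F L g) {A B : F → F} (hA : A 1 = 0) (hB : B 1 = 0)
    (hAB : ∀ x, (algebraMap F L x)′ = algebraMap F L (A x) + u * algebraMap F L (B x)) :
    ∃ n : ℕ, n ≠ 0 ∧ ∃ a b : F, a ≠ 0 ∧ A a = (B b + n * g) * a := by
  set P := minpoly F u with hP
  have huI : IsIntegral F u := hu.isIntegral
  have hdeg := minpoly.natDegree_pos huI
  obtain ⟨n, hn⟩ : ∃ n, P.natDegree = n + 1 := ⟨_, (Nat.succ_pred_eq_of_pos hdeg).symm⟩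
  have hlead : P.coeff (n + 1) = 1 := hn ▸ (minpoly.monic huI).coeff_natDegree
  let Q : F[X] := ∑ i ∈ Finset.range (n + 2),
    (monomial i (A (P.coeff i) + i * g * P.coeff i) + monomial (i + 1) (B (P.coeff i)))
  have hQ : aeval u Q = 0 := by
    have h0 : (aeval u P)′ = 0 := by rw [minpoly.aeval, map_zero]
    rw [aeval_eq_sum_range, hn, map_sum] at h0
    rw [← h0, map_sum]
    refine Finset.sum_congr rfl fun i _ ↦ ?_
    rw [Algebra.smul_def, Derivation.leibniz, hAB, Derivation.leibniz_pow, hg]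
    rcases i with _ | i <;> simp [aeval_monomial, pow_succ] <;> ring
  have hcoeff (j : ℕ) : Q.coeff (j + 1) = (if j + 1 < n + 2 then
      A (P.coeff (j + 1)) + (j + 1 : ℕ) * g * P.coeff (j + 1) else 0) +
      if j < n + 2 then B (P.coeff j) else 0 := by
    simp only [Q, finsetSum_coeff, coeff_add, coeff_monomial, Finset.sum_add_distrib,
      add_left_inj, Finset.sum_ite_eq', Finset.mem_range]
  have hcoeff0 : Q.coeff 0 = A (P.coeff 0) := by
    simp [Q, coeff_monomial, Finset.sum_add_distrib]
  have hQn : Q.coeff (n + 1) = B (P.coeff n) + (n + 1 : ℕ) * g := by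
    rw [hcoeff, if_pos (by omega), if_pos (by omega), hlead, hA]
    ring
  have hzero : Q - C (Q.coeff (n + 1)) * P = 0 := by
    by_contra hne
    refine (minpoly.degree_le_of_ne_zero F u hne (by simp [hQ, hP])).not_gt ?_
    rw [← hP, degree_eq_natDegree (minpoly.ne_zero huI), hn, degree_lt_iff_coeff_zero]
    intro j hj
    obtain rfl | hj := hj.eq_or_lt
    · simp [hlead]
    · obtain ⟨j, rfl⟩ := Nat.exists_eq_add_of_lt hj
      rw [coeff_sub, coeff_C_mul, coeff_eq_zero_of_natDegree_lt (p := P) (by omega), hcoeff,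
        if_neg (by omega)]
      rcases j with _ | j
      · simp [hlead, hB]
      · simp [show ¬ n + 1 + (j + 1) < n + 2 by omega]
  refine ⟨n + 1, n.succ_ne_zero, P.coeff 0, P.coeff n, minpoly.coeff_zero_ne_zero huI hu0, ?_⟩
  rw [← hQn, ← hcoeff0, sub_eq_zero.mp hzero]
  simp [hlead]

open IntermediateField in
/-- If `y` is transcendental over `K` and `y′′ = y′ * g(y)`, where `g` is the sum of a derivative
and a function with a simple pole at a constant, then `y′` is transcendental over `K(y)`. -/
theorem Differential.transcendental_deriv_of_simple_pole {K L : Type*} [Field K] [CharZero K]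
    [Field L] [Differential K] [Differential L] [Algebra K L] [DifferentialAlgebra K L] {y : L}
    (hy : Transcendental K y) (hy' : y′ ≠ 0) {r s v w : K[X]} {a c : K} (hs : s ≠ 0)
    (ha : a ≠ 0) (hc : c′ = 0) (hw : w.eval c ≠ 0)
    (hyy : y′′ = y′ * (aeval y (derivative r * s - r * derivative s) / aeval y (s ^ 2) +
      aeval y (C a) / aeval y (X - C c) + aeval y v / aeval y w)) :
    Transcendental K⟮y⟯ y′ := by
  intro halg
  have hinj : Function.Injective (aeval (R := K) y) := transcendental_iff_injective.mp hy
  have hne {p : K[X]} (hp : p ≠ 0) : aeval y p ≠ 0 := (map_ne_zero_iff _ hinj).mpr hp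
  have hmem (p : K[X]) : aeval y p ∈ K⟮y⟯ := (mem_adjoin_simple_iff K _).mpr ⟨p, 1, by simp⟩
  have hrep (x : K⟮y⟯) : ∃ p q : K[X], q ≠ 0 ∧ (x : L) = aeval y p / aeval y q := by
    obtain ⟨p, q, h⟩ := (mem_adjoin_simple_iff K _).mp x.2
    obtain rfl | hq := eq_or_ne q 0
    · exact ⟨0, 1, one_ne_zero, by simpa using h⟩
    · exact ⟨p, q, hq, h⟩
  choose num den hden hx using hrep
  let A (x : K⟮y⟯) : K⟮y⟯ := ⟨aeval y (mapCoeffs (num x) * den x - num x * mapCoeffs (den x)) /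
    aeval y (den x ^ 2), div_mem (hmem _) (hmem _)⟩
  let B (x : K⟮y⟯) : K⟮y⟯ := ⟨aeval y (derivative (num x) * den x - num x * derivative (den x)) /
    aeval y (den x ^ 2), div_mem (hmem _) (hmem _)⟩
  have hone : num 1 = den 1 := hinj ((div_eq_one_iff_eq (hne (hden 1))).mp (hx 1).symm)
  obtain ⟨n, hn, b, d, hb, h⟩ := halg.exists_relation_of_deriv_eq hy'
    (g := ⟨_, add_mem (add_mem (div_mem (hmem _) (hmem _)) (div_mem (hmem _) (hmem _)))
      (div_mem (hmem _) (hmem _))⟩) hyy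
    (A := A) (B := B) (by ext; simp [A, hone, mul_comm]) (by ext; simp [B, hone, mul_comm])
    (by
      intro x
      have hd := hne (hden x)
      change (x : L)′ = _ / _ + y′ * (_ / _)
      rw [hx x, div_eq_mul_inv, Derivation.leibniz, Derivation.leibniz_inv, deriv_aeval_eq,
        deriv_aeval_eq]
      simp only [map_sub, map_mul, map_pow, smul_eq_mul]
      field_simp
      ring)
  have hnum : num b ≠ 0 := by
    intro h0
    refine hb (Subtype.ext ?_)
    rw [hx b, h0]
    simp
  obtain ⟨p, hp, hp'⟩ := exists_mapCoeffs_mul_eq hnum hc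
  obtain ⟨q, hq, hq'⟩ := exists_mapCoeffs_mul_eq (hden b) hc
  have hX := X_sub_C_ne_zero c
  have hw0 : w ≠ 0 := by rintro rfl; simp at hw
  have hp0 : p ≠ 0 := by rintro rfl; simp at hp
  have hq0 : q ≠ 0 := by rintro rfl; simp at hq
  have hnK : (n : K) ≠ 0 := Nat.cast_ne_zero.mpr hn
  refine derivative_quotient_ne_simple_pole (t := num d * s + (n : K[X]) * r * den d) (s := den d * s)
    (v := (mapCoeffs p * q - p * mapCoeffs q) * w - (n : K[X]) * v * p * q) (w := p * q * w)
    (a := n * a) (c := c) (mul_ne_zero (hden d) hs) (mul_ne_zero hnK ha)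
    (by simp [hp, hq, hw]) (hinj ?_)
  have h := congrArg (algebraMap K⟮y⟯ L) h
  have hlog : aeval y (mapCoeffs (num b) * den b - num b * mapCoeffs (den b)) /
      aeval y (den b ^ 2) = (aeval y (mapCoeffs p * q - p * mapCoeffs q) / aeval y (p * q)) *
        (aeval y (num b) / aeval y (den b)) := by
    have := hne hp0
    have := hne hq0
    have := hne (hden b)
    have hp' := congrArg (aeval y) hp'
    have hq' := congrArg (aeval y) hq'
    simp only [map_sub, map_mul, map_pow] at hp' hq' ⊢
    field_simp
    linear_combination (aeval y q * aeval y (den b)) * hp' - aeval y p * aeval y (num b) * hq'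
  have key : aeval y (mapCoeffs p * q - p * mapCoeffs q) / aeval y (p * q) =
      aeval y (derivative (num d) * den d - num d * derivative (den d)) / aeval y (den d ^ 2) +
      n * (aeval y (derivative r * s - r * derivative s) / aeval y (s ^ 2) +
      aeval y (C a) / aeval y (X - C c) + aeval y v / aeval y w) := by
    refine mul_right_cancel₀ (div_ne_zero (hne hnum) (hne (hden b))) ?_
    rw [← hlog, ← hx b]
    simpa [A, B] using h
  have h1 := hne hp0
  have h2 := hne hq0
  have h3 := hne (hden d)
  have h4 := hne hs
  have h5 := hne hX
  have h6 := hne hw0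
  simp only [derivative_mul, derivative_natCast, map_sub, map_mul, map_pow,
    map_add, map_natCast, zero_mul, zero_add] at key h5 ⊢
  field_simp at key
  linear_combination -key

/-- Strong minimality of the Poizat equation `z'' = z' · f(z)`, `z' ≠ 0`,
for `f ∈ ℂ(z)` not the derivative of a rational function: over any differential
subfield `K ⊇ ℂ`, a solution `y` transcendental over `K` has `y, δy` algebraically
independent over `K`. -/
theorem poizat_strongly_minimal
    {L : Type} [Field L] [Algebra ℂ L]
    (δ : L → L)
    (hadd : ∀ a b : L, δ (a + b) = δ a + δ b)
    (hmul : ∀ a b : L, δ (a * b) = a * δ b + b * δ a)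
    (hδC : ∀ c : ℂ, δ (algebraMap ℂ L c) = 0)
    (K : IntermediateField ℂ L) (hK : ∀ x ∈ K, δ x ∈ K)
    (f : RatFunc ℂ)
    (hf : ¬ ∃ r s : Polynomial ℂ, s ≠ 0 ∧
      f = algebraMap (Polynomial ℂ) (RatFunc ℂ)
            (Polynomial.derivative r * s - r * Polynomial.derivative s) /
          algebraMap (Polynomial ℂ) (RatFunc ℂ) (s ^ 2))
    (y : L)
    (heq : δ (δ y) = δ y * RatFunc.eval (algebraMap ℂ L) y f)
    (hy' : δ y ≠ 0)
    (htr : Transcendental K y) :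
    AlgebraicIndependent K ![y, δ y] := by
  let _ : Differential L :=
    ⟨Derivation.mk' (AddMonoidHom.mk' δ hadd).toIntLinearMap hmul⟩
  let _ : Differential K := ⟨Derivation.mk'
    (AddMonoidHom.mk' (fun x : K ↦ (⟨δ x, hK x x.2⟩ : K))
      fun a b ↦ Subtype.ext (hadd a b)).toIntLinearMap fun a b ↦ Subtype.ext (hmul a b)⟩
  have : DifferentialAlgebra K L := ⟨fun _ ↦ rfl⟩
  have htrC : Function.Injective (aeval (R := ℂ) y) :=
    transcendental_iff_injective.mp (htr.restrictScalars (algebraMap ℂ K).injective)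
  let Φ := RatFunc.liftAlgHom (aeval (R := ℂ) y)
    (nonZeroDivisors_le_comap_nonZeroDivisors_of_injective _ htrC)
  have hΦ (p q : ℂ[X]) : Φ (algebraMap ℂ[X] (RatFunc ℂ) p / algebraMap ℂ[X] (RatFunc ℂ) q) =
      aeval y p / aeval y q := RatFunc.liftAlgHom_apply_div _ _ p q
  have heval : RatFunc.eval (algebraMap ℂ L) y f = Φ f := by
    conv_rhs => rw [← RatFunc.num_div_denom f, hΦ]
    rfl
  obtain ⟨_, ⟨r, s, hs, rfl⟩, a, c, v, w, ha, hw, hfeq⟩ := RatFunc.exists_residue_ne_zero hf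
  rw [heval, hfeq] at heq
  simp only [map_add, hΦ] at heq
  let j := algebraMap ℂ K
  have hj : Function.Injective j := j.injective
  have hmap (p : ℂ[X]) : aeval y p = aeval y (p.map j) := (aeval_map_algebraMap K y p).symm
  have htrans : Transcendental (IntermediateField.adjoin K {y}) (δ y) :=
    Differential.transcendental_deriv_of_simple_pole (r := r.map j) (s := s.map j) (v := v.map j)
      (w := w.map j) (a := j a) (c := j c) htr hy' ((Polynomial.map_ne_zero_iff hj).mpr hs)
      ((map_ne_zero_iff j hj).mpr ha) (Subtype.ext (hδC c))
      (by rw [eval_map_apply]; exact (map_ne_zero_iff j hj).mpr hw)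
      (by
        change δ (δ y) = _
        rw [heq]
        simp only [hmap, Polynomial.map_sub, Polynomial.map_mul, Polynomial.map_pow,
          derivative_map, Polynomial.map_C, Polynomial.map_X]
        rfl)
  refine (AlgebraicIndependent.iff_transcendental_adjoin_image 1).mpr ⟨?_, ?_⟩
  · have : Subsingleton {i : Fin 2 // i ≠ 1} := ⟨by decide⟩
    exact (algebraicIndependent_singleton_iff
      (⟨0, by decide⟩ : {i : Fin 2 // i ≠ 1})).mpr htr
  · have himage : (![y, δ y] : Fin 2 → L) '' {1}ᶜ = {y} := by
      ext x
      simp [Fin.exists_fin_two, eq_comm]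
    rw [himage]
    exact fun h ↦ htrans (IntermediateField.isAlgebraic_adjoin_iff.mpr h)
end

section
/- Let α₁, α₂, α₃ ∈ ℂ be algebraically independent over ℚ. For i = 1, 2, 3 set Aᵢ = ∏_{j ≠ i} (αᵢ − αⱼ)^{−1}, and set a = α₁ + α₂ + α₃ and b = α₁α₂ + α₁α₃ + α₂α₃. If m₁, m₂, m₃ ∈ ℚ and the element m₁A₁ + m₂A₂ + m₃A₃ is algebraic over the subfield ℚ(a, b) of ℂ, then m₁ = m₂ = m₃. -/
/-- A family of elements algebraic over `F(s)` that is algebraically independent over `F` has at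
most as many members as `s`. -/
theorem AlgebraicIndependent.enatCard_le_encard_of_isAlgebraic_adjoin
    {F E ι : Type*} [Field F] [Field E] [Algebra F E] {x : ι → E} {s : Set E}
    (hx : AlgebraicIndependent F x)
    (halg : ∀ i, IsAlgebraic (IntermediateField.adjoin F s) (x i)) :
    ENat.card ι ≤ s.encard := by
  have hindep : (AlgebraicIndependent.matroid F E).Indep (Set.range x) := hx.to_subtype_range
  have hsub : Set.range x ⊆ (AlgebraicIndependent.matroid F E).closure s := by
    rintro _ ⟨i, rfl⟩
    rw [AlgebraicIndependent.matroid_closure_eq]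
    exact IntermediateField.isAlgebraic_adjoin_iff.mp (halg i)
  calc ENat.card ι = (Set.range x).encard := by
        rw [← Set.image_univ, hx.injective.encard_image, Set.encard_univ]
    _ ≤ (AlgebraicIndependent.matroid F E).eRk ((AlgebraicIndependent.matroid F E).closure s) :=
        hindep.encard_le_eRk_of_subset hsub
    _ ≤ s.encard := by
        rw [Matroid.eRk_closure_eq]
        exact Matroid.eRk_le_encard _ _

/-- A root of a nonzero cubic with algebraic coefficients is algebraic. -/
theorem mem_algebraicClosure_of_cubic_root {K E : Type*} [Field K] [Field E] [Algebra K E]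
    {p q r s t : E} (hp : p ∈ algebraicClosure K E) (hq : q ∈ algebraicClosure K E)
    (hr : r ∈ algebraicClosure K E) (hs : s ∈ algebraicClosure K E)
    (hne : p ≠ 0 ∨ s ≠ 0) (hroot : p * t ^ 3 + q * t ^ 2 + r * t + s = 0) :
    t ∈ algebraicClosure K E := by
  let P : Cubic (algebraicClosure K E) := ⟨⟨p, hp⟩, ⟨q, hq⟩, ⟨r, hr⟩, ⟨s, hs⟩⟩
  have hP : P.toPoly ≠ 0 := hne.elim
    (fun h ↦ Cubic.ne_zero_of_a_ne_zero fun h' ↦ h (congrArg Subtype.val h'))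
    (fun h ↦ Cubic.ne_zero_of_d_ne_zero fun h' ↦ h (congrArg Subtype.val h'))
  have halg : IsAlgebraic (algebraicClosure K E) t := by
    refine ⟨P.toPoly, hP, ?_⟩
    simpa [P, Cubic.toPoly] using hroot
  exact mem_algebraicClosure_iff.mpr (halg.restrictScalars K)

/-- If `u² + uv + v²` and `(pv + qu) / (uv(u + v))` are algebraic, where `p` and `q` are algebraic
and not both zero, then so are `u` and `v`. -/
theorem mem_algebraicClosure_of_quadratic_of_quotient {K E : Type*} [Field K] [Field E]
    [Algebra K E] {p q u v θ : E} (hu : u ≠ 0) (hD₀ : u ^ 2 + u * v + v ^ 2 ≠ 0)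
    (hp : p ∈ algebraicClosure K E) (hq : q ∈ algebraicClosure K E) (hpq : p ≠ 0 ∨ q ≠ 0)
    (hD : u ^ 2 + u * v + v ^ 2 ∈ algebraicClosure K E) (hθ : θ ∈ algebraicClosure K E)
    (hrel : p * v + q * u = θ * (u * v * (u + v))) :
    u ∈ algebraicClosure K E ∧ v ∈ algebraicClosure K E := by
  have hc := sub_mem (add_mem hp hq) (mul_mem hθ hD)
  have ht : v / u ∈ algebraicClosure K E := by
    refine mem_algebraicClosure_of_cubic_root hp hc hc hq hpq ?_
    field_simp
    linear_combination (u ^ 2 + u * v + v ^ 2) * hrel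
  have hDu : u ^ 2 + u * v + v ^ 2 = u ^ 2 * (1 + v / u + (v / u) ^ 2) := by
    field_simp
  have hs : 1 + v / u + (v / u) ^ 2 ≠ 0 := fun h ↦ hD₀ (by rw [hDu, h, mul_zero])
  have hu2 : u ^ 2 ∈ algebraicClosure K E := by
    rw [eq_div_of_mul_eq hs hDu.symm]
    exact div_mem hD (add_mem (add_mem (one_mem _) ht) (pow_mem ht 2))
  have hu' : u ∈ algebraicClosure K E :=
    mem_algebraicClosure_iff'.mpr (.of_pow two_pos (mem_algebraicClosure_iff'.mp hu2))
  refine ⟨hu', ?_⟩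
  simpa [div_mul_cancel₀ v hu] using mul_mem ht hu'

/-- If `α₁, α₂, α₃ ∈ ℂ` are algebraically independent over `ℚ`,
`Aᵢ = ∏_{j≠i} (αᵢ - αⱼ)⁻¹`, `a = α₁+α₂+α₃`, `b = α₁α₂+α₁α₃+α₂α₃`, and
`m₁A₁ + m₂A₂ + m₃A₃` is algebraic over `ℚ(a,b)` for rationals `m₁, m₂, m₃`,
then `m₁ = m₂ = m₃`. -/
theorem residue_linear_relation
    (α₁ α₂ α₃ : ℂ) (hind : AlgebraicIndependent ℚ ![α₁, α₂, α₃])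
    (A₁ A₂ A₃ : ℂ)
    (hA₁ : A₁ = ((α₁ - α₂) * (α₁ - α₃))⁻¹)
    (hA₂ : A₂ = ((α₂ - α₁) * (α₂ - α₃))⁻¹)
    (hA₃ : A₃ = ((α₃ - α₁) * (α₃ - α₂))⁻¹)
    (a b : ℂ) (hab : a = α₁ + α₂ + α₃) (hbb : b = α₁ * α₂ + α₁ * α₃ + α₂ * α₃)
    (m₁ m₂ m₃ : ℚ)
    (halg : IsAlgebraic (IntermediateField.adjoin ℚ ({a, b} : Set ℂ))
      ((m₁ : ℂ) * A₁ + (m₂ : ℂ) * A₂ + (m₃ : ℂ) * A₃)) :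
    m₁ = m₂ ∧ m₂ = m₃ := by
  have hne (i j : Fin 3) (hij : i ≠ j) : ![α₁, α₂, α₃] i - ![α₁, α₂, α₃] j ≠ 0 :=
    sub_ne_zero.mpr (hind.injective.ne hij)
  have h₁₂ : α₁ - α₂ ≠ 0 := hne 0 1 (by decide)
  have h₁₃ : α₁ - α₃ ≠ 0 := hne 0 2 (by decide)
  have h₂₃ : α₂ - α₃ ≠ 0 := hne 1 2 (by decide)
  have hD₀ : (α₁ - α₂) ^ 2 + (α₁ - α₂) * (α₂ - α₃) + (α₂ - α₃) ^ 2 ≠ 0 := by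
    intro h
    let P : MvPolynomial (Fin 3) ℚ :=
      (.X 0 - .X 1) ^ 2 + (.X 0 - .X 1) * (.X 1 - .X 2) + (.X 1 - .X 2) ^ 2
    have hP : P = 0 := hind.eq_zero_of_aeval_eq_zero P (by simpa [P] using h)
    simpa [P] using congrArg (MvPolynomial.eval ![1, 0, 0]) hP
  by_contra hm
  have hpq : ((m₁ - m₂ : ℚ) : ℂ) ≠ 0 ∨ ((m₃ - m₂ : ℚ) : ℂ) ≠ 0 := by
    by_contra! h
    refine hm ⟨sub_eq_zero.mp (by exact_mod_cast h.1), (sub_eq_zero.mp ?_).symm⟩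
    exact_mod_cast h.2
  set K := IntermediateField.adjoin ℚ ({a, b} : Set ℂ)
  have haL : a ∈ algebraicClosure K ℂ := algebraMap_mem (algebraicClosure K ℂ)
    (⟨a, IntermediateField.subset_adjoin ℚ _ (by simp)⟩ : K)
  have hbL : b ∈ algebraicClosure K ℂ := algebraMap_mem (algebraicClosure K ℂ)
    (⟨b, IntermediateField.subset_adjoin ℚ _ (by simp)⟩ : K)
  have hD : (α₁ - α₂) ^ 2 + (α₁ - α₂) * (α₂ - α₃) + (α₂ - α₃) ^ 2 ∈ algebraicClosure K ℂ := by
    convert sub_mem (pow_mem haL 2) (mul_mem (ofNat_mem (algebraicClosure K ℂ) 3) hbL) using 1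
    rw [hab, hbb]
    ring
  obtain ⟨hu, hv⟩ := mem_algebraicClosure_of_quadratic_of_quotient h₁₂ hD₀
    (SubfieldClass.ratCast_mem _ (m₁ - m₂)) (SubfieldClass.ratCast_mem _ (m₃ - m₂)) hpq hD
    (mem_algebraicClosure_iff.mpr halg) (by
      rw [hA₁, hA₂, hA₃, ← neg_sub α₁ α₂, ← neg_sub α₁ α₃, ← neg_sub α₂ α₃]
      push_cast
      field_simp
      ring)
  have h₂ : α₂ ∈ algebraicClosure K ℂ := by
    convert div_mem (add_mem (sub_mem haL hu) hv) (ofNat_mem (algebraicClosure K ℂ) 3) using 1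
    rw [hab]
    ring
  have h₁ : α₁ ∈ algebraicClosure K ℂ := by simpa using add_mem hu h₂
  have h₃ : α₃ ∈ algebraicClosure K ℂ := by simpa using sub_mem h₂ hv
  have hcard := hind.enatCard_le_encard_of_isAlgebraic_adjoin (s := {a, b}) fun i ↦ by
    fin_cases i
    exacts [mem_algebraicClosure_iff.mp h₁, mem_algebraicClosure_iff.mp h₂,
      mem_algebraicClosure_iff.mp h₃]
  have hpair : ({a, b} : Set ℂ).encard ≤ 2 :=
    (Set.encard_insert_le {b} a).trans (by rw [Set.encard_singleton, one_add_one_eq_two])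
  have hle : (3 : ℕ∞) ≤ 2 := by simpa using hcard.trans hpair
  exact absurd hle (by decide)
end
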